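/- For all real numbers b, c, d, the polynomial maps F(x,y) = (x, xy² + y⁵ + by⁷ + cy⁸ + dy⁹) and G(x,y) = (x, xy² + y⁵ + (d − (5/6)b²)y⁹) have A⁹-equivalent 9-jets at the origin: j⁹F(0) ∼_{A⁹} j⁹G(0). -/

import Mathlib

open Filter Topology

noncomputable section

/-- Directional derivative of a scalar function. -/
def dop (v : ℝ × ℝ) (g : ℝ × ℝ → ℝ) : ℝ × ℝ → ℝ :=
  fun p => fderiv ℝ g p v

/-- Partial derivative operator in the first coordinate. -/
def pdx : (ℝ × ℝ → ℝ) → ℝ × ℝ → ℝ := dop (1, 0)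

/-- Partial derivative operator in the second coordinate. -/
def pdy : (ℝ × ℝ → ℝ) → ℝ × ℝ → ℝ := dop (0, 1)

/-- Taylor coefficient `a_{ij} = ∂_x^i ∂_y^j g(0,0) / (i! j!)` of `g` at the origin. -/
def tcoeff (g : ℝ × ℝ → ℝ) (i j : ℕ) : ℝ :=
  (pdx^[i] (pdy^[j] g)) 0 / (Nat.factorial i * Nat.factorial j)

/-- The Jacobian determinant `λ_f` of a map `f : ℝ² → ℝ²`. -/
def jacDet (f : ℝ × ℝ → ℝ × ℝ) (p : ℝ × ℝ) : ℝ :=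
  (fderiv ℝ f p (1, 0)).1 * (fderiv ℝ f p (0, 1)).2 -
    (fderiv ℝ f p (1, 0)).2 * (fderiv ℝ f p (0, 1)).1

/-- `f` has corank one at `0` : the derivative of `f` at `0` has rank one. -/
def CorankOne (f : ℝ × ℝ → ℝ × ℝ) : Prop :=
  LinearMap.rank ((fderiv ℝ f 0).toLinearMap) = 1

/-- `η` is a null vector field for `f` near `0`. -/
def IsNullVF (f η : ℝ × ℝ → ℝ × ℝ) : Prop :=
  η 0 ≠ 0 ∧ ∃ U ∈ 𝓝 (0 : ℝ × ℝ),
    ContDiffOn ℝ (⊤ : ℕ∞) η U ∧ ∀ p ∈ U, jacDet f p = 0 → fderiv ℝ f p (η p) = 0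

/-- The derivative `(ηg)(p) = Dg(p)(η(p))` of `g` along the vector field `η`. -/
def etaD (η : ℝ × ℝ → ℝ × ℝ) (g : ℝ × ℝ → ℝ) : ℝ × ℝ → ℝ :=
  fun p => fderiv ℝ g p (η p)

/-- The iterated derivative `η^k g` along the vector field `η`. -/
def etaIter (η : ℝ × ℝ → ℝ × ℝ) : ℕ → (ℝ × ℝ → ℝ) → ℝ × ℝ → ℝ
  | 0, g => g
  | k + 1, g => etaD η (etaIter η k g)

/-- The Hessian matrix of second partial derivatives of `g` at `0`. -/
def hess (g : ℝ × ℝ → ℝ) : Matrix (Fin 2) (Fin 2) ℝ :=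
  !![pdx (pdx g) 0, pdx (pdy g) 0; pdy (pdx g) 0, pdy (pdy g) 0]

/-- `A^r`-equivalence of the `r`-jets at `0` of two map-germs `(ℝ²,0) → (ℝ²,0)`. -/
def JetEquiv (r : ℕ) (f g : ℝ × ℝ → ℝ × ℝ) : Prop :=
  ∃ φ ψ : ℝ × ℝ → ℝ × ℝ,
    ContDiff ℝ (⊤ : ℕ∞) φ ∧ ContDiff ℝ (⊤ : ℕ∞) ψ ∧ φ 0 = 0 ∧ ψ 0 = 0 ∧
    Function.Bijective (⇑(fderiv ℝ φ 0)) ∧ Function.Bijective (⇑(fderiv ℝ ψ 0)) ∧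
    ∀ i ≤ r, iteratedFDeriv ℝ i (ψ ∘ f ∘ φ) 0 = iteratedFDeriv ℝ i g 0

/-- `A`-equivalence of two map-germs `(ℝ²,0) → (ℝ²,0)`. -/
def AEquiv (f g : ℝ × ℝ → ℝ × ℝ) : Prop :=
  ∃ φ ψ : ℝ × ℝ → ℝ × ℝ,
    ContDiff ℝ (⊤ : ℕ∞) φ ∧ ContDiff ℝ (⊤ : ℕ∞) ψ ∧ φ 0 = 0 ∧ ψ 0 = 0 ∧
    Function.Bijective (⇑(fderiv ℝ φ 0)) ∧ Function.Bijective (⇑(fderiv ℝ ψ 0)) ∧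
    ∀ᶠ p in 𝓝 (0 : ℝ × ℝ), ψ (f (φ p)) = g p

/-- `f` has the form `(x, g(x,y))` where `g` is `C^∞` and the Taylor coefficients of `g`
of total degree `< N` at the origin are prescribed by `P`. -/
def HasForm (f : ℝ × ℝ → ℝ × ℝ) (g : ℝ × ℝ → ℝ) (N : ℕ) (P : ℕ → ℕ → ℝ) : Prop :=
  ContDiff ℝ (⊤ : ℕ∞) g ∧ (∀ p, f p = (p.1, g p)) ∧
    ∀ i j, i + j < N → tcoeff g i j = P i j

/-!
The terms `by⁷` and `cy⁸` are removed one after the other. As only the 9-jet matters, the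
coordinate changes need to be right only up to order 10, and by the chain rule the two
equivalences compose.

The term `by⁷` is removed at the cost of changing `d`. Let `P` be the desired second component,
put `z = (2/3)by²`, and let `ρ` be a Taylor polynomial of `(1 + z)^(-1/2)`. The source change
`(x, y) ↦ (x + (2/3)bP, yρ)` followed by the target shear `(X, Y) ↦ (X - (2/3)bY, Y)` keeps the
first component. In the second, `xy²` is unchanged because `(1 + z)ρ² ≡ 1`, and
`ρ³ + (3/2)zρ⁵ ≡ 1 - (15/8)z²` shows that `y⁵ + by⁷` becomes
`y⁵ - (15/8)z²y⁵ = y⁵ - (5/6)b²y⁹`.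

For `cy⁸`, rescaling `y` by `s(x)` and `Y` by `s(x)⁻²` preserves `xy²` and turns `y⁵` into
`s³y⁵ = y⁵ + xτy⁵`. The substitution `y ↦ y(1 - τy³/2)` cancels `xτy⁵` against the change of
`xy²` and brings in `-(5/2)τy⁸`, which removes `cy⁸` if `τ(0) = 2c/5`.
-/

open scoped ContDiff

section Jets

variable {E F G : Type*} [NormedAddCommGroup E] [NormedSpace ℝ E]
  [NormedAddCommGroup F] [NormedSpace ℝ F] [NormedAddCommGroup G] [NormedSpace ℝ G]

theorem iteratedFDeriv_comp_congr {g g' : F → G} {f f' : E → F} {x : E} {n : ℕ}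
    (hg : ContDiffAt ℝ n g (f x)) (hg' : ContDiffAt ℝ n g' (f x))
    (hf : ContDiffAt ℝ n f x) (hf' : ContDiffAt ℝ n f' x)
    (hgg' : ∀ i ≤ n, iteratedFDeriv ℝ i g (f x) = iteratedFDeriv ℝ i g' (f x))
    (hff' : ∀ i ≤ n, iteratedFDeriv ℝ i f x = iteratedFDeriv ℝ i f' x) :
    ∀ i ≤ n, iteratedFDeriv ℝ i (g ∘ f) x = iteratedFDeriv ℝ i (g' ∘ f') x := by
  intro i hi
  have hx : f x = f' x := by simpa using DFunLike.congr_fun (hff' 0 n.zero_le) 0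
  rw [iteratedFDeriv_comp hg hf (by exact_mod_cast hi),
    iteratedFDeriv_comp (hx ▸ hg') hf' (by exact_mod_cast hi)]
  refine Finset.sum_congr rfl fun c _ => ?_
  have houter : ftaylorSeries ℝ g (f x) c.length = ftaylorSeries ℝ g' (f' x) c.length :=
    hx ▸ hgg' _ (c.length_le.trans hi)
  have hinner : ∀ m, ftaylorSeries ℝ f x (c.partSize m) = ftaylorSeries ℝ f' x (c.partSize m) :=
    fun m => hff' _ ((c.partSize_le m).trans hi)
  simp only [FormalMultilinearSeries.compAlongOrderedFinpartition, houter, hinner]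

theorem bijective_fderiv_comp {g : F → G} {f : E → F} {x : E}
    (hg : DifferentiableAt ℝ g (f x)) (hf : DifferentiableAt ℝ f x)
    (hgb : Function.Bijective (fderiv ℝ g (f x))) (hfb : Function.Bijective (fderiv ℝ f x)) :
    Function.Bijective (fderiv ℝ (g ∘ f) x) := by
  rw [fderiv_comp x hg hf]
  exact hgb.comp hfb

theorem JetEquiv.trans {r : ℕ} {f g h : ℝ × ℝ → ℝ × ℝ} (hfg : JetEquiv r f g)
    (hgh : JetEquiv r g h) (hf : ContDiffAt ℝ r f 0) (hg : ContDiffAt ℝ r g 0) :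
    JetEquiv r f h := by
  obtain ⟨φ₁, ψ₁, hφ₁, hψ₁, hφ₁0, hψ₁0, hφ₁b, hψ₁b, hfg⟩ := hfg
  obtain ⟨φ₂, ψ₂, hφ₂, hψ₂, hφ₂0, hψ₂0, hφ₂b, hψ₂b, hgh⟩ := hgh
  have hr : (r : WithTop ℕ∞) ≤ ∞ := by exact_mod_cast le_top
  have hmid : ContDiffAt ℝ r (ψ₁ ∘ f ∘ φ₁) 0 :=
    (hψ₁.of_le hr).contDiffAt.comp 0
      ((hφ₁0.symm ▸ hf : ContDiffAt ℝ r f (φ₁ 0)).comp 0 (hφ₁.of_le hr).contDiffAt)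
  have hmid' : ∀ i ≤ r, iteratedFDeriv ℝ i ((ψ₁ ∘ f ∘ φ₁) ∘ φ₂) 0
      = iteratedFDeriv ℝ i (g ∘ φ₂) 0 :=
    iteratedFDeriv_comp_congr (hφ₂0.symm ▸ hmid) (hφ₂0.symm ▸ hg) (hφ₂.of_le hr).contDiffAt
      (hφ₂.of_le hr).contDiffAt (hφ₂0.symm ▸ hfg) fun _ _ => rfl
  refine ⟨φ₁ ∘ φ₂, ψ₂ ∘ ψ₁, hφ₁.comp hφ₂, hψ₂.comp hψ₁, by simp [hφ₁0, hφ₂0],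
    by simp [hψ₁0, hψ₂0], ?_, ?_, fun i hi => ?_⟩
  · exact bijective_fderiv_comp (hφ₁.differentiable (by simp) _) (hφ₂.differentiable (by simp) _)
      (hφ₂0.symm ▸ hφ₁b) hφ₂b
  · exact bijective_fderiv_comp (hψ₂.differentiable (by simp) _) (hψ₁.differentiable (by simp) _)
      (hψ₁0.symm ▸ hψ₂b) hψ₁b
  · rw [← hgh i hi]
    exact iteratedFDeriv_comp_congr (hψ₂.of_le hr).contDiffAt (hψ₂.of_le hr).contDiffAt
      ((hφ₂0.symm ▸ hmid : ContDiffAt ℝ r (ψ₁ ∘ f ∘ φ₁) (φ₂ 0)).comp 0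
        (hφ₂.of_le hr).contDiffAt)
      ((hφ₂0.symm ▸ hg : ContDiffAt ℝ r g (φ₂ 0)).comp 0 (hφ₂.of_le hr).contDiffAt)
      (fun _ _ => rfl) hmid' i hi

end Jets

section VanishingOrder

variable {E F G A : Type*} [NormedAddCommGroup E] [NormedSpace ℝ E]
  [NormedAddCommGroup F] [NormedSpace ℝ F] [NormedAddCommGroup G] [NormedSpace ℝ G]
  [NormedRing A] [NormedAlgebra ℝ A] {x : E} {m n : ℕ}

/-- `f` is smooth and its derivatives of order `< n` vanish at `x`: the jets of order `n - 1` of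
`f` and of `0` at `x` agree. Smoothness is global, as in `JetEquiv`. -/
def VanishesToOrder (f : E → F) (n : ℕ) (x : E) : Prop :=
  ContDiff ℝ ∞ f ∧ ∀ i < n, iteratedFDeriv ℝ i f x = 0

theorem vanishesToOrder_zero_fun : VanishesToOrder (fun _ : E => (0 : F)) n x :=
  ⟨contDiff_const, fun i _ => by simp⟩

theorem vanishesToOrder_one_of_apply_eq_zero {f : E → F} (hf : ContDiff ℝ ∞ f) (hx : f x = 0) :
    VanishesToOrder f 1 x := by
  refine ⟨hf, fun i hi => ?_⟩
  obtain rfl : i = 0 := by lia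
  ext
  simp [hx]

namespace VanishesToOrder

theorem mono {f : E → F} (hf : VanishesToOrder f n x) (hmn : m ≤ n) : VanishesToOrder f m x :=
  ⟨hf.1, fun i hi => hf.2 i (hi.trans_le hmn)⟩

theorem add {f g : E → F} (hf : VanishesToOrder f n x) (hg : VanishesToOrder g n x) :
    VanishesToOrder (fun p => f p + g p) n x := by
  refine ⟨hf.1.add hg.1, fun i hi => ?_⟩
  have hi' : (i : WithTop ℕ∞) ≤ ∞ := by exact_mod_cast le_top
  rw [fun_iteratedFDeriv_add_apply (hf.1.of_le hi').contDiffAt (hg.1.of_le hi').contDiffAt,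
    hf.2 i hi, hg.2 i hi, add_zero]

theorem prodMk {f : E → F} {g : E → G} (hf : VanishesToOrder f n x)
    (hg : VanishesToOrder g n x) : VanishesToOrder (fun p => (f p, g p)) n x := by
  refine ⟨hf.1.prodMk hg.1, fun i hi => ?_⟩
  rw [iteratedFDeriv_prodMk hf.1.contDiffAt hg.1.contDiffAt (by exact_mod_cast le_top),
    hf.2 i hi, hg.2 i hi]
  rfl

theorem mul {f g : E → A} (hf : VanishesToOrder f m x) (hg : VanishesToOrder g n x) :
    VanishesToOrder (fun p => f p * g p) (m + n) x := by
  refine ⟨hf.1.mul hg.1, fun i hi => norm_le_zero_iff.1 ?_⟩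
  refine (norm_iteratedFDeriv_mul_le hf.1 hg.1 x (by exact_mod_cast le_top)).trans_eq ?_
  refine Finset.sum_eq_zero fun j hj => ?_
  have hji : j ≤ i := Nat.lt_succ_iff.1 (Finset.mem_range.1 hj)
  rcases lt_or_ge j m with hjm | hmj
  · simp [hf.2 j hjm]
  · simp [hg.2 (i - j) (by lia)]

theorem mul_contDiff {f g : E → A} (hf : VanishesToOrder f n x) (hg : ContDiff ℝ ∞ g) :
    VanishesToOrder (fun p => f p * g p) n x :=
  hf.mul (n := 0) ⟨hg, by simp⟩

theorem pow {f : E → A} (hf : VanishesToOrder f m x) (k : ℕ) :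
    VanishesToOrder (fun p => f p ^ k) (m * k) x := by
  induction k with
  | zero => exact ⟨by simpa using contDiff_const, by simp⟩
  | succ k ih => simpa only [pow_succ, mul_add_one] using ih.mul hf

theorem contDiff_of_sub {f g : E → F} (h : VanishesToOrder (fun p => f p - g p) n x)
    (hg : ContDiff ℝ ∞ g) : ContDiff ℝ ∞ f := by
  simpa using h.1.add hg

theorem iteratedFDeriv_eq_of_sub {f g : E → F} (h : VanishesToOrder (fun p => f p - g p) n x)
    (hg : ContDiff ℝ ∞ g) {i : ℕ} (hi : i < n) :
    iteratedFDeriv ℝ i f x = iteratedFDeriv ℝ i g x := by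
  have hi' : (i : WithTop ℕ∞) ≤ ∞ := by exact_mod_cast le_top
  have hdiff := h.2 i hi
  rwa [fun_iteratedFDeriv_sub_apply ((h.contDiff_of_sub hg).of_le hi').contDiffAt
    (hg.of_le hi').contDiffAt, sub_eq_zero] at hdiff

theorem eq_of_sub {f g : E → F} (h : VanishesToOrder (fun p => f p - g p) n x)
    (hg : ContDiff ℝ ∞ g) (hn : 0 < n) : f x = g x := by
  simpa using DFunLike.congr_fun (h.iteratedFDeriv_eq_of_sub hg hn) 0

theorem fderiv_eq_of_sub {f g : E → F} (h : VanishesToOrder (fun p => f p - g p) n x)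
    (hg : ContDiff ℝ ∞ g) (hn : 1 < n) : fderiv ℝ f x = fderiv ℝ g x := by
  ext v
  simpa using DFunLike.congr_fun (h.iteratedFDeriv_eq_of_sub hg hn) fun _ => v

end VanishesToOrder

theorem vanishesToOrder_monomial {i j : ℕ} (hn : n ≤ i + j) :
    VanishesToOrder (fun p : ℝ × ℝ => p.1 ^ i * p.2 ^ j) n 0 := by
  have hfst : VanishesToOrder (fun p : ℝ × ℝ => p.1) 1 0 :=
    vanishesToOrder_one_of_apply_eq_zero contDiff_fst rfl
  have hsnd : VanishesToOrder (fun p : ℝ × ℝ => p.2) 1 0 :=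
    vanishesToOrder_one_of_apply_eq_zero contDiff_snd rfl
  exact ((hfst.pow i).mul (hsnd.pow j)).mono (by lia)

theorem vanishesToOrder_snd_pow : VanishesToOrder (fun p : ℝ × ℝ => p.2 ^ n) n 0 := by
  simpa using vanishesToOrder_monomial (i := 0) n.zero_add.ge

theorem JetEquiv.of_vanishesToOrder {r : ℕ} {f g φ ψ : ℝ × ℝ → ℝ × ℝ}
    (L M : (ℝ × ℝ) ≃L[ℝ] (ℝ × ℝ)) (hg : ContDiff ℝ ∞ g)
    (hφ : VanishesToOrder (fun p => φ p - L p) 2 0)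
    (hψ : VanishesToOrder (fun p => ψ p - M p) 2 0)
    (h : VanishesToOrder (fun p => ψ (f (φ p)) - g p) (r + 1) 0) : JetEquiv r f g := by
  refine ⟨φ, ψ, hφ.contDiff_of_sub L.contDiff, hψ.contDiff_of_sub M.contDiff, ?_, ?_, ?_, ?_,
    fun i hi => h.iteratedFDeriv_eq_of_sub hg (Nat.lt_succ_of_le hi)⟩
  · simpa using hφ.eq_of_sub L.contDiff two_pos
  · simpa using hψ.eq_of_sub M.contDiff two_pos
  · rw [hφ.fderiv_eq_of_sub L.contDiff one_lt_two, L.fderiv]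
    exact L.bijective
  · rw [hψ.fderiv_eq_of_sub M.contDiff one_lt_two, M.fderiv]
    exact M.bijective

end VanishingOrder

section RiegerMap

/-- The second component `xy² + y⁵ + by⁷ + cy⁸ + dy⁹` of `riegerMap b c d`. -/
def riegerSnd (b c d x y : ℝ) : ℝ :=
  x * y ^ 2 + y ^ 5 + b * y ^ 7 + c * y ^ 8 + d * y ^ 9

/-- The map `(x, xy² + y⁵ + by⁷ + cy⁸ + dy⁹)`: the quasihomogeneous germ `(x, xy² + y⁵)` with
the higher terms that are to be normalised. -/
def riegerMap (b c d : ℝ) (p : ℝ × ℝ) : ℝ × ℝ :=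
  (p.1, riegerSnd b c d p.1 p.2)

theorem contDiff_riegerMap (b c d : ℝ) {n : WithTop ℕ∞} : ContDiff ℝ n (riegerMap b c d) := by
  unfold riegerMap riegerSnd
  fun_prop

end RiegerMap

theorem one_add_pow_eq_one_add_mul_geom_sum {R : Type*} [Ring R] (u : R) (n : ℕ) :
    (1 + u) ^ n = 1 + u * ∑ i ∈ Finset.range n, (1 + u) ^ i := by
  have hgeom := mul_geom_sum (1 + u) n
  rw [add_sub_cancel_left] at hgeom
  rw [hgeom, add_sub_cancel]

section SeventhDegree

/-- The Taylor polynomial of degree three of `(1 + z)^(-1/2)` at `0`. -/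
def invSqrtTaylor (z : ℝ) : ℝ :=
  1 - 1 / 2 * z + 3 / 8 * z ^ 2 - 5 / 16 * z ^ 3

theorem contDiff_invSqrtTaylor {n : WithTop ℕ∞} : ContDiff ℝ n invSqrtTaylor := by
  unfold invSqrtTaylor
  fun_prop

theorem one_add_mul_invSqrtTaylor_sq (z : ℝ) :
    (1 + z) * invSqrtTaylor z ^ 2
      = 1 + z ^ 4 * (-35 / 64 + 7 / 32 * z - 35 / 256 * z ^ 2 + 25 / 256 * z ^ 3) := by
  unfold invSqrtTaylor
  ring

theorem exists_invSqrtTaylor_pow_eq (n : ℕ) :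
    ∃ K : ℝ → ℝ, ContDiff ℝ ∞ K ∧ ∀ z, invSqrtTaylor z ^ n = 1 + z * K z := by
  have hρ : ContDiff ℝ ∞ invSqrtTaylor := contDiff_invSqrtTaylor
  refine ⟨fun z => (-1 / 2 + 3 / 8 * z - 5 / 16 * z ^ 2)
    * ∑ i ∈ Finset.range n, invSqrtTaylor z ^ i, by fun_prop, fun z => ?_⟩
  have hz : invSqrtTaylor z = 1 + z * (-1 / 2 + 3 / 8 * z - 5 / 16 * z ^ 2) := by
    unfold invSqrtTaylor
    ring
  have hpow := one_add_pow_eq_one_add_mul_geom_sum (z * (-1 / 2 + 3 / 8 * z - 5 / 16 * z ^ 2)) n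
  simpa only [← hz, mul_assoc] using hpow

theorem exists_invSqrtTaylor_cube_add_eq :
    ∃ K : ℝ → ℝ, ContDiff ℝ ∞ K ∧ ∀ z,
      invSqrtTaylor z ^ 3 + 3 / 2 * z * invSqrtTaylor z ^ 5 = 1 - 15 / 8 * z ^ 2 + z ^ 3 * K z := by
  let μ : ℝ → ℝ := fun z => -1 / 2 + 3 / 8 * z - 5 / 16 * z ^ 2
  refine ⟨fun z => -15 / 16 + (3 / 8 - 5 / 16 * z) * (3 * μ z + 6) + 15 * μ z ^ 2 + μ z ^ 3
    + 15 * z * μ z ^ 3 + 15 / 2 * z ^ 2 * μ z ^ 4 + 3 / 2 * z ^ 3 * μ z ^ 5, by fun_prop,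
    fun z => ?_⟩
  simp only [invSqrtTaylor, μ]
  ring

theorem exists_riegerSnd_shear_sub_eq (b c d : ℝ) :
    ∃ K : ℝ × ℝ → ℝ, ContDiff ℝ ∞ K ∧ ∀ p : ℝ × ℝ,
      riegerSnd b c d (p.1 + 2 / 3 * b * riegerSnd 0 c (d - 5 / 6 * b ^ 2) p.1 p.2)
          (p.2 * invSqrtTaylor (2 / 3 * b * p.2 ^ 2))
        - riegerSnd 0 c (d - 5 / 6 * b ^ 2) p.1 p.2 = p.2 ^ 10 * K p := by
  obtain ⟨K₃, hK₃, h₃⟩ := exists_invSqrtTaylor_cube_add_eq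
  obtain ⟨K₆, hK₆, h₆⟩ := exists_invSqrtTaylor_pow_eq 6
  obtain ⟨K₇, hK₇, h₇⟩ := exists_invSqrtTaylor_pow_eq 7
  obtain ⟨t, rfl⟩ : ∃ t, b = 3 / 2 * t := ⟨2 / 3 * b, by ring⟩
  let z : ℝ × ℝ → ℝ := fun p => t * p.2 ^ 2
  have hρ : ContDiff ℝ ∞ invSqrtTaylor := contDiff_invSqrtTaylor
  refine ⟨fun p =>
    t ^ 4 * (-35 / 64 + 7 / 32 * z p - 35 / 256 * z p ^ 2 + 25 / 256 * z p ^ 3)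
        * (p.1 + p.2 ^ 3 + c * p.2 ^ 6 + (d - 15 / 8 * t ^ 2) * p.2 ^ 7)
      + invSqrtTaylor (z p) ^ 2
        * (t ^ 3 * p.2 * K₃ (z p) + c * t * K₆ (z p) + d * t * p.2 * K₇ (z p)),
    by fun_prop, fun p => ?_⟩
  have h₂ := one_add_mul_invSqrtTaylor_sq (t * p.2 ^ 2)
  specialize h₃ (t * p.2 ^ 2)
  specialize h₆ (t * p.2 ^ 2)
  specialize h₇ (t * p.2 ^ 2)
  have ht : 2 / 3 * (3 / 2 * t) = t := by ring
  simp only [riegerSnd, ht, z]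
  generalize invSqrtTaylor (t * p.2 ^ 2) = ρ at *
  linear_combination
    (p.1 * p.2 ^ 2 + p.2 ^ 5 + c * p.2 ^ 8 + (d - 15 / 8 * t ^ 2) * p.2 ^ 9) * h₂
    + p.2 ^ 5 * ρ ^ 2 * h₃ + c * p.2 ^ 8 * ρ ^ 2 * h₆ + d * p.2 ^ 9 * ρ ^ 2 * h₇

/-- The shear `(x, y) ↦ (x + ty, y)` of the plane. -/
def horizontalShear (t : ℝ) : (ℝ × ℝ) ≃L[ℝ] (ℝ × ℝ) :=
  .equivOfInverse
    ((ContinuousLinearMap.fst ℝ ℝ ℝ + t • ContinuousLinearMap.snd ℝ ℝ ℝ).prod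
      (ContinuousLinearMap.snd ℝ ℝ ℝ))
    ((ContinuousLinearMap.fst ℝ ℝ ℝ - t • ContinuousLinearMap.snd ℝ ℝ ℝ).prod
      (ContinuousLinearMap.snd ℝ ℝ ℝ))
    (fun p => by simp) (fun p => by simp)

theorem horizontalShear_apply (t : ℝ) (p : ℝ × ℝ) : horizontalShear t p = (p.1 + t * p.2, p.2) :=
  rfl

theorem jetEquiv_riegerMap_remove_seventh (b c d : ℝ) :
    JetEquiv 9 (riegerMap b c d) (riegerMap 0 c (d - 5 / 6 * b ^ 2)) := by
  obtain ⟨K, hK, hrem⟩ := exists_riegerSnd_shear_sub_eq b c d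
  refine .of_vanishesToOrder (.refl ℝ _) (horizontalShear (-(2 / 3 * b)))
    (φ := fun p => (p.1 + 2 / 3 * b * riegerSnd 0 c (d - 5 / 6 * b ^ 2) p.1 p.2,
      p.2 * invSqrtTaylor (2 / 3 * b * p.2 ^ 2)))
    (ψ := horizontalShear (-(2 / 3 * b)))
    (contDiff_riegerMap _ _ _) ?_ (by simpa using vanishesToOrder_zero_fun) ?_
  · have hfst : VanishesToOrder (fun p : ℝ × ℝ => p.2 ^ 2 * (2 / 3 * b
        * (p.1 + p.2 ^ 3 + c * p.2 ^ 6 + (d - 5 / 6 * b ^ 2) * p.2 ^ 7))) 2 0 :=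
      vanishesToOrder_snd_pow.mul_contDiff (by fun_prop)
    have hsnd : VanishesToOrder (fun p : ℝ × ℝ => p.2 ^ 1
        * (invSqrtTaylor (2 / 3 * b * p.2 ^ 2) - 1)) 2 0 :=
      vanishesToOrder_snd_pow.mul (vanishesToOrder_one_of_apply_eq_zero
        ((contDiff_invSqrtTaylor.comp (by fun_prop)).sub contDiff_const) (by simp [invSqrtTaylor]))
    convert hfst.prodMk hsnd using 2 with p
    ext
    · simp only [riegerSnd, ContinuousLinearEquiv.refl_apply, Prod.fst_sub]; ring
    · simp only [ContinuousLinearEquiv.refl_apply, Prod.snd_sub]; ring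
  · have hR : VanishesToOrder (fun p : ℝ × ℝ => p.2 ^ 10 * K p) 10 0 :=
      vanishesToOrder_snd_pow.mul_contDiff hK
    have hfst : VanishesToOrder (fun p : ℝ × ℝ => p.2 ^ 10 * K p * (-(2 / 3 * b))) 10 0 :=
      hR.mul_contDiff contDiff_const
    convert hfst.prodMk hR using 2 with p
    rw [← hrem p]
    ext
    · simp only [horizontalShear_apply, riegerMap, Prod.fst_sub]; ring
    · simp only [horizontalShear_apply, riegerMap, Prod.snd_sub]

end SeventhDegree

section EighthDegree

theorem exists_contDiff_pos_pow_eq {E : Type*} [NormedAddCommGroup E] [NormedSpace ℝ E]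
    {f : E → ℝ} {k : WithTop ℕ∞} (hf : ContDiff ℝ k f) (hpos : ∀ x, 0 < f x) {n : ℕ}
    (hn : n ≠ 0) : ∃ g : E → ℝ, ContDiff ℝ k g ∧ (∀ x, 0 < g x) ∧ ∀ x, g x ^ n = f x :=
  ⟨fun x => f x ^ (n : ℝ)⁻¹, hf.rpow_const_of_ne fun x => (hpos x).ne',
    fun x => Real.rpow_pos_of_pos (hpos x) _,
    fun x => Real.rpow_inv_natCast_pow (hpos x).le hn⟩

/-- The function `τ` of the eighth-degree step: `1 + xτ(x)` is the cube of the factor by which `y`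
is rescaled. The value `τ(0)` makes the `y⁸` term cancel, the slope the `xy⁸` term. -/
def rescalingRate (k x : ℝ) : ℝ :=
  k + 11 / 10 * k ^ 2 * x

theorem contDiff_rescalingRate (k : ℝ) {n : WithTop ℕ∞} : ContDiff ℝ n (rescalingRate k) := by
  unfold rescalingRate
  fun_prop

theorem one_add_mul_rescalingRate_pos (k x : ℝ) : 0 < 1 + x * rescalingRate k x := by
  unfold rescalingRate
  nlinarith [sq_nonneg (1 + k * x / 2), sq_nonneg (k * x)]

theorem rescalingRate_octic_coeff_eq (k x : ℝ) :
    x * rescalingRate k x ^ 2 / 4 - 5 / 2 * rescalingRate k x * (1 + x * rescalingRate k x)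
        + 5 / 2 * k * (1 + x * rescalingRate k x) ^ 2
      = x ^ 2 * (11 / 20 * k ^ 3 - 1089 / 400 * k ^ 4 * x + 5 / 2 * k * rescalingRate k x ^ 2) := by
  unfold rescalingRate
  ring

theorem inv_sq_mul_riegerSnd_mul {s : ℝ} (hs : s ≠ 0) (b c d x y : ℝ) :
    (s ^ 2)⁻¹ * riegerSnd b c d x (s * y)
      = x * y ^ 2 + s ^ 3 * y ^ 5 + b * s ^ 5 * y ^ 7 + c * s ^ 6 * y ^ 8 + d * s ^ 7 * y ^ 9 := by
  unfold riegerSnd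
  field_simp

theorem exists_riegerSnd_rescale_sub_eq (k d : ℝ) {s : ℝ → ℝ} (hs : ContDiff ℝ ∞ s)
    (hs0 : ∀ x, s x ≠ 0) (hcube : ∀ x, s x ^ 3 = 1 + x * rescalingRate k x) :
    ∃ K L : ℝ × ℝ → ℝ, ContDiff ℝ ∞ K ∧ ContDiff ℝ ∞ L ∧ ∀ p : ℝ × ℝ,
      (s p.1 ^ 2)⁻¹ * riegerSnd 0 (5 / 2 * k) d p.1
          (s p.1 * (p.2 * (1 + -rescalingRate k p.1 / 2 * p.2 ^ 3)))
        - riegerSnd 0 0 d p.1 p.2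
      = p.1 ^ 2 * p.2 ^ 8 * K p + p.2 ^ 9 * (s p.1 ^ 7 - 1) * d + p.2 ^ 11 * L p := by
  have hτ : ContDiff ℝ ∞ (rescalingRate k) := contDiff_rescalingRate k
  let α : ℝ → ℝ := fun x => -rescalingRate k x / 2
  let quintic : ℝ × ℝ → ℝ := fun p => 10 * α p.1 ^ 2 + 10 * α p.1 ^ 3 * p.2 ^ 3
    + 5 * α p.1 ^ 4 * p.2 ^ 6 + α p.1 ^ 5 * p.2 ^ 9
  let geom : ℕ → ℝ × ℝ → ℝ := fun n p => ∑ i ∈ Finset.range n, (1 + α p.1 * p.2 ^ 3) ^ i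
  refine ⟨fun p => 11 / 20 * k ^ 3 - 1089 / 400 * k ^ 4 * p.1 + 5 / 2 * k * rescalingRate k p.1 ^ 2,
    fun p => (1 + p.1 * rescalingRate k p.1) * quintic p
      + 5 / 2 * k * (1 + p.1 * rescalingRate k p.1) ^ 2 * α p.1 * geom 8 p
      + d * p.2 * s p.1 ^ 7 * α p.1 * geom 9 p,
    by fun_prop, by fun_prop, fun p => ?_⟩
  obtain ⟨x, y⟩ := p
  have h8 := one_add_pow_eq_one_add_mul_geom_sum (α x * y ^ 3) 8
  have h9 := one_add_pow_eq_one_add_mul_geom_sum (α x * y ^ 3) 9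
  have hoctic := rescalingRate_octic_coeff_eq k x
  specialize hcube x
  rw [inv_sq_mul_riegerSnd_mul (hs0 x)]
  simp only [riegerSnd, quintic, geom, α] at h8 h9 ⊢
  generalize rescalingRate k x = τ at *
  have h2 : (1 + -τ / 2 * y ^ 3) ^ 2 = 1 - τ * y ^ 3 + τ ^ 2 / 4 * y ^ 6 := by ring
  generalize hr : 1 + -τ / 2 * y ^ 3 = r at *
  have h5 : r ^ 5 = 1 + 5 * (-τ / 2) * y ^ 3 + y ^ 6 * (10 * (-τ / 2) ^ 2
      + 10 * (-τ / 2) ^ 3 * y ^ 3 + 5 * (-τ / 2) ^ 4 * y ^ 6 + (-τ / 2) ^ 5 * y ^ 9) := by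
    rw [← hr]
    ring
  linear_combination x * y ^ 2 * h2
    + y ^ 5 * (r ^ 5 * hcube + (1 + x * τ) * h5)
    + 5 / 2 * k * y ^ 8 * (r ^ 8 * (s x ^ 3 + 1 + x * τ) * hcube + (1 + x * τ) ^ 2 * h8)
    + d * y ^ 9 * s x ^ 7 * h9 + y ^ 8 * hoctic

theorem vanishesToOrder_rescale_snd_sub_id {u : ℝ × ℝ → ℝ} (hu : ContDiff ℝ ∞ u) (hu0 : u 0 = 1) :
    VanishesToOrder (fun p : ℝ × ℝ => (p.1, p.2 * u p) - p) 2 0 := by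
  have hsnd : VanishesToOrder (fun p : ℝ × ℝ => p.2 ^ 1 * (u p - 1)) 2 0 :=
    vanishesToOrder_snd_pow.mul
      (vanishesToOrder_one_of_apply_eq_zero (hu.sub contDiff_const) (by simp [hu0]))
  convert vanishesToOrder_zero_fun.prodMk hsnd using 2 with p
  ext
  · simp
  · simp only [Prod.snd_sub]; ring

theorem jetEquiv_riegerMap_remove_eighth (c d : ℝ) :
    JetEquiv 9 (riegerMap 0 c d) (riegerMap 0 0 d) := by
  obtain ⟨k, rfl⟩ : ∃ k, c = 5 / 2 * k := ⟨2 / 5 * c, by ring⟩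
  have hτ : ContDiff ℝ ∞ (rescalingRate k) := contDiff_rescalingRate k
  obtain ⟨s, hs, hpos, hcube⟩ := exists_contDiff_pos_pow_eq
    (contDiff_const.add (contDiff_id.mul hτ)) (one_add_mul_rescalingRate_pos k) three_ne_zero
  have hs0 : ∀ x, s x ≠ 0 := fun x => (hpos x).ne'
  have hone : s 0 = 1 := (pow_eq_one_iff_of_nonneg (hpos 0).le three_ne_zero).1 (by simp [hcube])
  have hinv : ContDiff ℝ ∞ fun p : ℝ × ℝ => (s p.1 ^ 2)⁻¹ :=
    (by fun_prop : ContDiff ℝ ∞ fun p : ℝ × ℝ => s p.1 ^ 2).inv fun p => pow_ne_zero 2 (hs0 p.1)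
  obtain ⟨K, L, hK, hL, hrem⟩ := exists_riegerSnd_rescale_sub_eq k d hs hs0 hcube
  refine .of_vanishesToOrder (.refl ℝ _) (.refl ℝ _)
    (φ := fun p => (p.1, p.2 * (s p.1 * (1 + -rescalingRate k p.1 / 2 * p.2 ^ 3))))
    (ψ := fun p => (p.1, p.2 * (s p.1 ^ 2)⁻¹)) (contDiff_riegerMap _ _ _)
    (vanishesToOrder_rescale_snd_sub_id (by fun_prop) (by simp [hone]))
    (vanishesToOrder_rescale_snd_sub_id hinv (by simp [hone])) ?_
  have h8 : VanishesToOrder (fun p : ℝ × ℝ => p.1 ^ 2 * p.2 ^ 8 * K p) 10 0 :=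
    (vanishesToOrder_monomial le_rfl).mul_contDiff hK
  have h9 : VanishesToOrder (fun p : ℝ × ℝ => p.2 ^ 9 * (s p.1 ^ 7 - 1) * d) 10 0 :=
    (vanishesToOrder_snd_pow.mul (vanishesToOrder_one_of_apply_eq_zero
      (by fun_prop) (by simp [hone]))).mul_contDiff contDiff_const
  have h11 : VanishesToOrder (fun p : ℝ × ℝ => p.2 ^ 11 * L p) 10 0 :=
    (vanishesToOrder_snd_pow.mul_contDiff hL).mono (by simp)
  convert vanishesToOrder_zero_fun.prodMk ((h8.add h9).add h11) using 2 with p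
  rw [← hrem p]
  ext
  · simp [riegerMap]
  · simp only [riegerMap, Prod.snd_sub, mul_left_comm p.2, mul_comm _ (s p.1 ^ 2)⁻¹]

end EighthDegree

theorem stmt12 (b c d : ℝ) :
    JetEquiv 9 (fun p => (p.1, p.1 * p.2 ^ 2 + p.2 ^ 5 + b * p.2 ^ 7 + c * p.2 ^ 8 + d * p.2 ^ 9))
      (fun p => (p.1, p.1 * p.2 ^ 2 + p.2 ^ 5 + (d - 5 / 6 * b ^ 2) * p.2 ^ 9)) := by
  have hremove : JetEquiv 9 (riegerMap b c d) (riegerMap 0 0 (d - 5 / 6 * b ^ 2)) :=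
    (jetEquiv_riegerMap_remove_seventh b c d).trans
      (jetEquiv_riegerMap_remove_eighth c (d - 5 / 6 * b ^ 2))
      (contDiff_riegerMap b c d).contDiffAt (contDiff_riegerMap 0 c _).contDiffAt
  convert hremove using 2 with p <;> simp [riegerMap, riegerSnd]
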